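/- Let κ be a weakly compact cardinal. If every Σ¹₁ subset of κ^κ satisfies the Hurewicz dichotomy, then every Σ¹₁ subset of κ^κ is κ-Miller measurable. -/

import Mathlib

open Cardinal Set Topology

universe u

/-- The bounded topology on `K → Y`: basic open sets are determined by an
initial segment of values. -/
def bTop (K : Type u) [LinearOrder K] (Y : Type u) : TopologicalSpace (K → Y) :=
  TopologicalSpace.generateFrom
    {U | ∃ (b : K) (s : K → Y), U = {x | ∀ i, i < b → x i = s i}}

/-- `A` is κ-compact: every open cover (for the bounded topology) has a
subcover of size `< #K`. -/
def KCompact (K : Type u) [LinearOrder K] {Y : Type u} (A : Set (K → Y)) : Prop :=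
  ∀ 𝒰 : Set (Set (K → Y)), (∀ U ∈ 𝒰, IsOpen[bTop K Y] U) → A ⊆ ⋃₀ 𝒰 →
    ∃ 𝒱 ⊆ 𝒰, #𝒱 < #K ∧ A ⊆ ⋃₀ 𝒱

/-- `B` is a `K_κ` subset: a union of κ-many κ-compact sets. -/
def IsKK (K : Type u) [LinearOrder K] (B : Set (K → K)) : Prop :=
  ∃ C : K → Set (K → K), (∀ b, KCompact K (C b)) ∧ B = ⋃ b, C b

/-- Nodes of the tree `Y^{<K}`: sequences of length `b`, for `b : K`. -/
abbrev Nd (K : Type u) [LinearOrder K] (Y : Type u) := Σ b : K, (Set.Iio b → Y)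

/-- Restriction of a node to a smaller length. -/
def ndRes (K : Type u) [LinearOrder K] {Y : Type u} (p : Nd K Y) (c : K) (h : c ≤ p.1) :
    Nd K Y :=
  ⟨c, fun i => p.2 ⟨i.1, lt_of_lt_of_le i.2 h⟩⟩

/-- Restriction of a branch `x : K → Y` to length `b`. -/
def xRes (K : Type u) [LinearOrder K] {Y : Type u} (x : K → Y) (b : K) : Nd K Y :=
  ⟨b, fun i => x i.1⟩

/-- `q` extends `p` as a sequence. -/
def NdExt (K : Type u) [LinearOrder K] {Y : Type u} (q p : Nd K Y) : Prop :=
  ∃ h : p.1 ≤ q.1, ∀ i : Set.Iio p.1, q.2 ⟨i.1, lt_of_lt_of_le i.2 h⟩ = p.2 i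

/-- A subtree of `Y^{<K}`: a set of nodes closed under restriction. -/
def IsSubtree (K : Type u) [LinearOrder K] {Y : Type u} (T : Set (Nd K Y)) : Prop :=
  ∀ p ∈ T, ∀ c, ∀ h : c ≤ p.1, ndRes K p c h ∈ T

/-- The body `[T]`: the set of `K`-branches through `T`. -/
def body (K : Type u) [LinearOrder K] {Y : Type u} (T : Set (Nd K Y)) : Set (K → Y) :=
  {x | ∀ b : K, xRes K x b ∈ T}

/-- `T` is pruned: every node is extended by a branch. -/
def Pruned (K : Type u) [LinearOrder K] {Y : Type u} (T : Set (Nd K Y)) : Prop :=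
  ∀ p ∈ T, ∃ x ∈ body K T, NdExt K (xRes K x p.1) p

/-- `b` is a limit element: not least, and with no immediate predecessor. -/
def IsLimElt (K : Type u) [LinearOrder K] (b : K) : Prop :=
  (∃ c, c < b) ∧ ∀ c, c < b → ∃ d, c < d ∧ d < b

/-- Superclosed: closed under unions of increasing sequences of length `< K`. -/
def Superclosed (K : Type u) [LinearOrder K] {Y : Type u} (T : Set (Nd K Y)) : Prop :=
  ∀ p : Nd K Y, IsLimElt K p.1 → (∀ c, ∀ h : c < p.1, ndRes K p c h.le ∈ T) → p ∈ T

/-- The values at position `p.1` realized by extensions of `p` in `T`, i.e. the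
immediate successors of `p` in `T`. -/
def splitVals (K : Type u) [LinearOrder K] {Y : Type u} (T : Set (Nd K Y)) (p : Nd K Y) :
    Set Y :=
  {a | ∃ q ∈ T, ∃ h : p.1 < q.1,
    (∀ i : Set.Iio p.1, q.2 ⟨i.1, i.2.trans h⟩ = p.2 i) ∧ q.2 ⟨p.1, h⟩ = a}

/-- A perfect tree: a nonempty superclosed subtree in which every node is
extended by a 2-splitting node. -/
def PerfectTree (K : Type u) [LinearOrder K] (T : Set (Nd K K)) : Prop :=
  T.Nonempty ∧ IsSubtree K T ∧ Superclosed K T ∧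
    ∀ p ∈ T, ∃ q ∈ T, NdExt K q p ∧
      ∃ a ∈ splitVals K T q, ∃ a' ∈ splitVals K T q, a ≠ a'

/-- A κ-Miller tree: a nonempty superclosed subtree in which every node is
extended by a κ-splitting node. -/
def MillerTree (K : Type u) [LinearOrder K] (T : Set (Nd K K)) : Prop :=
  T.Nonempty ∧ IsSubtree K T ∧ Superclosed K T ∧
    ∀ p ∈ T, ∃ q ∈ T, NdExt K q p ∧ #K ≤ #(splitVals K T q)

/-- A κ-tree: a subtree of height `K` all of whose levels have size `< #K`. -/
def KTree (K : Type u) [LinearOrder K] {Y : Type u} (T : Set (Nd K Y)) : Prop :=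
  (∀ b : K, ∃ t : Set.Iio b → Y, (⟨b, t⟩ : Nd K Y) ∈ T) ∧
    ∀ b : K, #{t : Set.Iio b → Y | (⟨b, t⟩ : Nd K Y) ∈ T} < #K

/-- A κ-Aronszajn tree: a κ-tree with no branch. -/
def Aronszajn (K : Type u) [LinearOrder K] (S : Set (Nd K K)) : Prop :=
  IsSubtree K S ∧ KTree K S ∧ body K S = ∅

/-- The tree property for `K`: every κ-tree has a branch. -/
def TreeProp (K : Type u) [LinearOrder K] : Prop :=
  ∀ T : Set (Nd K K), IsSubtree K T → KTree K T → (body K T).Nonempty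

/-- weak compactness: inaccessibility together with the tree property. -/
def WComp (K : Type u) [LinearOrder K] : Prop :=
  (#K).IsInaccessible ∧ TreeProp K

/-- `C` is homeomorphic to the generalized Baire space `K → K`. -/
def HomeoToBaire (K : Type u) [LinearOrder K] (C : Set (K → K)) : Prop :=
  letI := bTop K K
  Nonempty (↥C ≃ₜ (K → K))

/-- `C` is homeomorphic to the generalized Cantor space `K → ULift.{u} Bool`. -/
def HomeoToCantor (K : Type u) [LinearOrder K] (C : Set (K → K)) : Prop :=
  letI := bTop K K
  letI : TopologicalSpace (K → ULift.{u} Bool) := bTop K (ULift.{u} Bool)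
  Nonempty (↥C ≃ₜ (K → ULift.{u} Bool))

/-- The Hurewicz dichotomy for `A`. -/
def HD (K : Type u) [LinearOrder K] (A : Set (K → K)) : Prop :=
  (∃ B, IsKK K B ∧ A ⊆ B) ∨
    ∃ C ⊆ A, IsClosed[bTop K K] C ∧ HomeoToBaire K C

/-- The Miller-tree Hurewicz dichotomy for `A`. -/
def MillerHD (K : Type u) [LinearOrder K] (A : Set (K → K)) : Prop :=
  (∃ B, IsKK K B ∧ A ⊆ B) ∨ ∃ T, MillerTree K T ∧ body K T ⊆ A

/-- Σ¹₁ subsets of `K → K`: projections of closed subsets of the product. -/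
def Sigma11 (K : Type u) [LinearOrder K] (A : Set (K → K)) : Prop :=
  letI := bTop K K
  ∃ C : Set ((K → K) × (K → K)), IsClosed C ∧ A = Prod.fst '' C

/-- The κ-perfect set property. -/
def PSP (K : Type u) [LinearOrder K] (A : Set (K → K)) : Prop :=
  #A ≤ #K ∨ ∃ C ⊆ A, IsClosed[bTop K K] C ∧ HomeoToCantor K C

/-- `A ⊆ K → K` is bounded. -/
def BddSet (K : Type u) [LinearOrder K] (A : Set (K → K)) : Prop :=
  ∃ x : K → K, ∀ y ∈ A, ∀ i, y i ≤ x i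

/-- `A ⊆ K → K` is eventually bounded. -/
def EvBddSet (K : Type u) [LinearOrder K] (A : Set (K → K)) : Prop :=
  ∃ x : K → K, ∀ y ∈ A, ∃ b : K, ∀ i, b ≤ i → y i ≤ x i

/-- Nodes of the product tree `K^{<K} × K^{<K}` (pairs of equal length). -/
abbrev PNd (K : Type u) [LinearOrder K] := Σ b : K, (Set.Iio b → K) × (Set.Iio b → K)

/-- Subtree of the product tree: closed under simultaneous restriction. -/
def IsPSubtree (K : Type u) [LinearOrder K] (T : Set (PNd K)) : Prop :=
  ∀ p ∈ T, ∀ c, ∀ h : c ≤ p.1,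
    (⟨c, fun i => p.2.1 ⟨i.1, lt_of_lt_of_le i.2 h⟩,
        fun i => p.2.2 ⟨i.1, lt_of_lt_of_le i.2 h⟩⟩ : PNd K) ∈ T

/-- The projection `p[T]` of the set of branches of a product tree to the first
coordinate. -/
def pProj (K : Type u) [LinearOrder K] (T : Set (PNd K)) : Set (K → K) :=
  {x | ∃ y : K → K, ∀ b : K,
    (⟨b, fun i => x i.1, fun i => y i.1⟩ : PNd K) ∈ T}

/-- An `∃^x`-perfect embedding into a product tree `T`. -/
def PerfEmb (K : Type u) [LinearOrder K] (T : Set (PNd K)) (e : Nd K (ULift.{u} Bool) → PNd K) : Prop :=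
  (∀ u, e u ∈ T) ∧
  (∀ u u' : Nd K (ULift.{u} Bool), ∀ h : u.1 < u'.1,
     (∀ i : Set.Iio u.1, u'.2 ⟨i.1, i.2.trans h⟩ = u.2 i) →
     ∃ h' : (e u).1 < (e u').1,
       (∀ i : Set.Iio (e u).1, (e u').2.1 ⟨i.1, i.2.trans h'⟩ = (e u).2.1 i) ∧
       (∀ i : Set.Iio (e u).1, (e u').2.2 ⟨i.1, i.2.trans h'⟩ = (e u).2.2 i)) ∧
  (∀ u u' : Nd K (ULift.{u} Bool), ¬ NdExt K u u' → ¬ NdExt K u' u →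
     ¬ NdExt K ⟨(e u).1, (e u).2.1⟩ ⟨(e u').1, (e u').2.1⟩ ∧
     ¬ NdExt K ⟨(e u').1, (e u').2.1⟩ ⟨(e u).1, (e u).2.1⟩) ∧
  (∀ u : Nd K (ULift.{u} Bool), IsLimElt K u.1 → ∀ d, d < (e u).1 →
     ∃ c, ∃ h : c < u.1, d < (e (ndRes K u c h.le)).1)

/-- The immediate extension `u⌢⟨a⟩` of a node `u` by a value `a`. -/
def extNd (K : Type u) [LinearOrder K] [SuccOrder K] (u : Nd K K) (a : K) : Nd K K :=
  ⟨Order.succ u.1, fun i => if h : i.1 < u.1 then u.2 ⟨i.1, h⟩ else a⟩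

/-- An `∃^x`-superperfect embedding into a product tree `T`. -/
def SuperPerfEmb (K : Type u) [LinearOrder K] [SuccOrder K] (T : Set (PNd K))
    (e : Nd K K → PNd K) : Prop :=
  (∀ u, e u ∈ T) ∧
  (∀ u u' : Nd K K, ∀ h : u.1 < u'.1,
     (∀ i : Set.Iio u.1, u'.2 ⟨i.1, i.2.trans h⟩ = u.2 i) →
     ∃ h' : (e u).1 < (e u').1,
       (∀ i : Set.Iio (e u).1, (e u').2.1 ⟨i.1, i.2.trans h'⟩ = (e u).2.1 i) ∧
       (∀ i : Set.Iio (e u).1, (e u').2.2 ⟨i.1, i.2.trans h'⟩ = (e u).2.2 i)) ∧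
  (∀ u : Nd K K, IsLimElt K u.1 → ∀ d, d < (e u).1 →
     ∃ c, ∃ h : c < u.1, d < (e (ndRes K u c h.le)).1) ∧
  (∀ u : Nd K K, ∃ γ : K, (e u).1 ≤ γ ∧
     ∃ hlen : ∀ a : K, γ < (e (extNd K u a)).1,
       ∀ a b : K, a ≠ b →
         (∀ i : Set.Iio γ,
           (e (extNd K u a)).2.1 ⟨i.1, i.2.trans (hlen a)⟩ =
           (e (extNd K u b)).2.1 ⟨i.1, i.2.trans (hlen b)⟩) ∧
         (e (extNd K u a)).2.1 ⟨γ, hlen a⟩ ≠ (e (extNd K u b)).2.1 ⟨γ, hlen b⟩)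

/-- Agreement of two branches below `b`. -/
def Ag {K : Type u} [LinearOrder K] (b : K) (x y : K → K) : Prop := ∀ i, i < b → x i = y i

section Helpers

variable {K : Type u} [LinearOrder K]

lemma Ag.symm {b : K} {x y : K → K} (h : Ag b x y) : Ag b y x := fun i hi => (h i hi).symm

lemma Ag.trans {b : K} {x y z : K → K} (h : Ag b x y) (h' : Ag b y z) : Ag b x z :=
  fun i hi => (h i hi).trans (h' i hi)

lemma Ag.mono {b c : K} {x y : K → K} (h : Ag b x y) (hc : c ≤ b) : Ag c x y :=
  fun i hi => h i (hi.trans_le hc)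

lemma Ag.refl (b : K) (x : K → K) : Ag b x x := fun _ _ => rfl

lemma xRes_eq_iff {x y : K → K} {b : K} : xRes K x b = xRes K y b ↔ Ag b x y := by
  constructor
  · intro h i hi
    have h2 : (fun i : Set.Iio b => x i.1) = fun i : Set.Iio b => y i.1 := by
      simpa [xRes] using h
    exact congrFun h2 ⟨i, hi⟩
  · intro h
    have h2 : (fun i : Set.Iio b => x i.1) = fun i : Set.Iio b => y i.1 := by
      funext i; exact h i.1 i.2
    simp [xRes, h2]

lemma xRes_eq_iff' {x y : K → K} {b c : K} :
    xRes K x b = xRes K y c ↔ b = c ∧ Ag b x y := by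
  constructor
  · intro h
    have h1 : b = c := congrArg Sigma.fst h
    subst h1
    exact ⟨rfl, xRes_eq_iff.1 h⟩
  · rintro ⟨rfl, h⟩
    exact xRes_eq_iff.2 h

lemma exists_xRes (p : Nd K K) : ∃ (x : K → K) (b : K), p = xRes K x b := by
  classical
  obtain ⟨b, t⟩ := p
  refine ⟨fun i => if h : i < b then t ⟨i, h⟩ else b, b, ?_⟩
  have : t = fun i : Set.Iio b => if h : i.1 < b then t ⟨i.1, h⟩ else b := by
    funext i
    have : i.1 < b := i.2
    simp [this]
  unfold xRes
  exact congrArg (Sigma.mk b) this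

lemma ndExt_xRes {x y : K → K} {b c : K} :
    NdExt K (xRes K x b) (xRes K y c) ↔ c ≤ b ∧ Ag c x y := by
  constructor
  · rintro ⟨h, h2⟩
    exact ⟨h, fun i hi => h2 ⟨i, hi⟩⟩
  · rintro ⟨h, h2⟩
    exact ⟨h, fun i => h2 i.1 i.2⟩

lemma mem_splitVals_xRes {T : Set (Nd K K)} {x : K → K} {b a : K} :
    a ∈ splitVals K T (xRes K x b) ↔
      ∃ (y : K → K) (e : K), xRes K y e ∈ T ∧ b < e ∧ Ag b y x ∧ y b = a := by
  constructor
  · rintro ⟨q, hq, h, h1, h2⟩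
    obtain ⟨y, e, rfl⟩ := exists_xRes q
    exact ⟨y, e, hq, h, fun i hi => h1 ⟨i, hi⟩, h2⟩
  · rintro ⟨y, e, hq, h, h1, h2⟩
    exact ⟨xRes K y e, hq, h, fun i => h1 i.1 i.2, h2⟩

lemma mk_Iic_lt (hreg : (#K).IsRegular) (hseg : ∀ b : K, #(Set.Iio b) < #K) (b : K) :
    #(Set.Iic b) < #K := by
  have h : Set.Iic b = insert b (Set.Iio b) := by
    ext i; simp [le_iff_eq_or_lt]
  rw [h]
  refine (mk_insert_le).trans_lt (add_lt_of_lt hreg.aleph0_le (hseg b) ?_)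
  exact_mod_cast hreg.nat_lt 1

lemma exists_bound (hreg : (#K).IsRegular) (hseg : ∀ b : K, #(Set.Iio b) < #K)
    (X : Set K) (hX : #X < #K) : ∃ M, ∀ x ∈ X, x < M := by
  by_contra! h
  have h1 : (Set.univ : Set K) ⊆ ⋃ x : X, Set.Iic x.1 := by
    intro M _
    obtain ⟨x, hx, hM⟩ := h M
    exact Set.mem_iUnion.2 ⟨⟨x, hx⟩, hM⟩
  have h2 : #(⋃ x : X, Set.Iic x.1) < #K :=
    (card_iUnion_lt_iff_forall_of_isRegular hreg hX).2 (fun x => mk_Iic_lt hreg hseg x.1)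
  have h3 := (mk_le_mk_of_subset h1).trans_lt h2
  simp at h3

lemma exists_bound_range (hreg : (#K).IsRegular) (hseg : ∀ b : K, #(Set.Iio b) < #K)
    {I : Type u} (hI : #I < #K) (v : I → K) : ∃ M, ∀ i, v i < M := by
  obtain ⟨M, hM⟩ := exists_bound hreg hseg (Set.range v) (mk_range_le.trans_lt hI)
  exact ⟨M, fun i => hM _ ⟨i, rfl⟩⟩

lemma exists_next [WellFoundedLT K] (hreg : (#K).IsRegular) (hseg : ∀ b : K, #(Set.Iio b) < #K)
    (b : K) : ∃ e, b < e ∧ ∀ d, d < e → d ≤ b := by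
  have hne : {e | b < e}.Nonempty := by
    obtain ⟨M, hM⟩ := exists_bound hreg hseg {b} (by simpa using hreg.nat_lt 1)
    exact ⟨M, hM b rfl⟩
  refine ⟨wellFounded_lt.min _ hne, wellFounded_lt.min_mem _ hne, fun d hd => ?_⟩
  by_contra h
  exact wellFounded_lt.not_lt_min _ (not_le.1 h : d ∈ {e | b < e}) hd

lemma isOpen_bTop_iff (hne : Nonempty K) {U : Set (K → K)} :
    IsOpen[bTop K K] U ↔ ∀ x ∈ U, ∃ b : K, ∀ w, Ag b w x → w ∈ U := by
  constructor
  · intro h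
    induction h with
    | basic s hs =>
      obtain ⟨b, s, rfl⟩ := hs
      intro x hx
      exact ⟨b, fun w hw i hi => (hw i hi).trans (hx i hi)⟩
    | univ => exact fun x _ => ⟨hne.some, fun _ _ => trivial⟩
    | inter s t _ _ ih1 ih2 =>
      intro x hx
      obtain ⟨b, hb⟩ := ih1 x hx.1
      obtain ⟨c, hc⟩ := ih2 x hx.2
      exact ⟨max b c, fun w hw => ⟨hb w (hw.mono (le_max_left _ _)),
        hc w (hw.mono (le_max_right _ _))⟩⟩
    | sUnion S _ ih =>
      rintro x ⟨s, hs, hx⟩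
      obtain ⟨b, hb⟩ := ih s hs x hx
      exact ⟨b, fun w hw => ⟨s, hs, hb w hw⟩⟩
  · intro h
    choose! b hb using h
    have : U = ⋃₀ {V | ∃ x ∈ U, V = {w | ∀ i, i < b x → w i = x i}} := by
      ext w
      constructor
      · intro hw
        exact ⟨_, ⟨w, hw, rfl⟩, fun _ _ => rfl⟩
      · rintro ⟨_, ⟨x, hx, rfl⟩, hw⟩
        exact hb x hx w hw
    rw [this]
    apply TopologicalSpace.GenerateOpen.sUnion
    rintro _ ⟨x, hx, rfl⟩
    exact TopologicalSpace.GenerateOpen.basic _ ⟨b x, x, rfl⟩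

lemma isClosed_bTop_iff (hne : Nonempty K) {C : Set (K → K)} :
    IsClosed[bTop K K] C ↔ ∀ x, (∀ b : K, ∃ w ∈ C, Ag b w x) → x ∈ C := by
  rw [← @isOpen_compl_iff _ _ (bTop K K), isOpen_bTop_iff hne]
  constructor
  · intro h x hx
    by_contra hc
    obtain ⟨b, hb⟩ := h x hc
    obtain ⟨w, hw, hwx⟩ := hx b
    exact hb w hwx hw
  · intro h x hx
    by_contra! hc
    refine hx (h x fun b => ?_)
    obtain ⟨w, hw, hwc⟩ := hc b
    exact ⟨w, not_not.1 hwc, hw⟩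

/-- The fusion machine producing Miller trees. -/
theorem machine [WellFoundedLT K] (hreg : (#K).IsRegular) (hseg : ∀ b : K, #(Set.Iio b) < #K)
    (C0 : Set (K → K)) (Fam : Set (Set (K → K))) (f : K → K)
    (h0 : C0 ∈ Fam) (hsub : ∀ F ∈ Fam, F ⊆ C0)
    (hch : ∀ (I : Type u) [Nonempty I] (F : I → Set (K → K)), #I < #K → (∀ i, F i ∈ Fam) →
      (∀ i j, F i ⊆ F j ∨ F j ⊆ F i) → (⋂ i, F i) ∈ Fam)
    (hsp : ∀ F ∈ Fam, ∃ β, ∃ τ ∈ F, #K ≤ #{a | ∃ w ∈ F, Ag β w τ ∧ w β = a})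
    (hsh : ∀ F ∈ Fam, ∀ w ∈ F, ∀ b, ∃ F' ∈ Fam, F' ⊆ F ∧ ∀ v ∈ F', Ag b v w) :
    ∃ S, MillerTree K S ∧ (∀ x b, xRes K x b ∈ S → ∃ w ∈ C0, Ag b w x) ∧
      ∀ x ∈ body K S, ∀ b, ∃ d, b ≤ d ∧ f d < x d := by
  classical
  have hKne : Nonempty K := mk_ne_zero_iff.1 hreg.pos.ne'
  choose! β τ hτ hsplit using hsp
  let V : Set (K → K) → Set K := fun F => {a | (∃ w ∈ F, Ag (β F) w (τ F) ∧ w (β F) = a) ∧ f (β F) < a}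
  have hV : ∀ F ∈ Fam, #K ≤ #(V F) := by
    intro F hF
    by_contra! h
    have h1 : {a | ∃ w ∈ F, Ag (β F) w (τ F) ∧ w (β F) = a} ⊆ V F ∪ Set.Iic (f (β F)) := by
      intro a ha
      rcases le_or_gt a (f (β F)) with h | h
      · exact Or.inr h
      · exact Or.inl ⟨ha, h⟩
    have h2 := (hsplit F hF).trans ((mk_le_mk_of_subset h1).trans (mk_union_le _ _))
    exact absurd h2 (not_le.2 (add_lt_of_lt hreg.aleph0_le h (mk_Iic_lt hreg hseg _)))
  have hg : ∀ F ∈ Fam, ∀ a ∈ V F, ∃ F' ∈ Fam, F' ⊆ F ∧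
      ∀ v ∈ F', Ag (β F) v (τ F) ∧ v (β F) = a := by
    rintro F hF a ⟨⟨w, hw, hwτ, hwa⟩, -⟩
    obtain ⟨e, he, -⟩ := exists_next hreg hseg (β F)
    obtain ⟨F', hF', hs, hv⟩ := hsh F hF w hw e
    exact ⟨F', hF', hs, fun v hv' => ⟨((hv v hv').mono he.le).trans hwτ,
      (hv v hv' _ he).trans hwa⟩⟩
  choose! g hgF hgs hgv using hg
  let H : Set (K → K) → (K → K) → K → Set (K → K) :=
    fun F x d => if d = β F then F ∩ g F (x d) else F
  have hHs : ∀ F x d, H F x d ⊆ F := by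
    intro F x d
    by_cases h : d = β F
    · simp only [H, if_pos h]; exact Set.inter_subset_left
    · simp only [H, if_neg h]; exact subset_rfl
  obtain ⟨FF, hFF⟩ : ∃ FF : (K → K) → K → Set (K → K), ∀ x c,
      FF x c = C0 ∩ ⋂ d : Set.Iio c, H (FF x d.1) x d.1 := by
    refine ⟨fun x => wellFounded_lt.fix
      (fun c ih => C0 ∩ ⋂ d : Set.Iio c, H (ih d.1 d.2) x d.1), fun x c => ?_⟩
    exact WellFounded.fix_eq _ _ _
  have hmemFF : ∀ x c w, w ∈ FF x c ↔ w ∈ C0 ∧ ∀ d, d < c → w ∈ H (FF x d) x d := by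
    intro x c w
    rw [hFF]
    simp
  have hloc : ∀ x y c, Ag c x y → FF x c = FF y c := by
    intro x y c
    induction c using WellFoundedLT.induction with
    | _ c ih =>
    intro hxy
    ext w
    rw [hmemFF, hmemFF]
    refine and_congr_right fun _ => forall_congr' fun d => ?_
    refine imp_congr_right fun hd => ?_
    rw [ih d hd (hxy.mono hd.le)]
    simp only [H, hxy d hd]
  have hanti : ∀ x c d, d ≤ c → FF x c ⊆ FF x d := by
    intro x c d hdc w hw
    rw [hmemFF] at hw ⊢
    exact ⟨hw.1, fun e he => hw.2 e (he.trans_le hdc)⟩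
  have hFH : ∀ x c d, d < c → FF x c ⊆ H (FF x d) x d :=
    fun x c d hdc w hw => ((hmemFF x c w).1 hw).2 d hdc
  have hstay : ∀ x e c, e ≤ c → (∀ d, e ≤ d → d < c → d ≠ β (FF x d)) → FF x c = FF x e := by
    intro x e c
    induction c using WellFoundedLT.induction with
    | _ c ih =>
    intro hec hd
    refine (hanti x c e hec).antisymm fun w hw => ?_
    have hw' := (hmemFF x e w).1 hw
    rw [hmemFF]
    refine ⟨hw'.1, fun d hdc => ?_⟩
    rcases lt_or_ge d e with hde | hde
    · exact hw'.2 d hde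
    · have := ih d hdc hde (fun d' h1 h2 => hd d' h1 (h2.trans hdc))
      simp only [H, if_neg (hd d hde hdc)]
      rw [this]; exact hw
  let Ok : (K → K) → K → Prop := fun x d =>
    (d < β (FF x d) ∧ x d = τ (FF x d) d) ∨ (d = β (FF x d) ∧ x d ∈ V (FF x d))
  have hOkloc : ∀ x y d, Ag d x y → x d = y d → (Ok x d ↔ Ok y d) := by
    intro x y d h h'
    simp only [Ok, hloc x y d h, h']
  have hinv : ∀ x c, (∀ d, d < c → Ok x d) →
      FF x c ∈ Fam ∧ c ≤ β (FF x c) ∧ Ag c (τ (FF x c)) x := by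
    intro x c
    induction c using WellFoundedLT.induction with
    | _ c ih =>
    intro hok
    have ih' : ∀ d, d < c → FF x d ∈ Fam ∧ d ≤ β (FF x d) ∧ Ag d (τ (FF x d)) x :=
      fun d hd => ih d hd fun d' hd' => hok d' (hd'.trans hd)
    have hHmem : ∀ d, d < c → H (FF x d) x d ∈ Fam := by
      intro d hd
      by_cases h : d = β (FF x d)
      · simp only [H, if_pos h]
        have hxV : x d ∈ V (FF x d) := by
          rcases hok d hd with h1 | h1
          · exact absurd h h1.1.ne
          · exact h1.2
        rw [Set.inter_eq_right.2 (hgs _ (ih' d hd).1 _ hxV)]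
        exact hgF _ (ih' d hd).1 _ hxV
      · simp only [H, if_neg h]
        exact (ih' d hd).1
    have hmem : FF x c ∈ Fam := by
      by_cases hc : Nonempty (Set.Iio c)
      · have h1 := hch (Set.Iio c) (fun d => H (FF x d.1) x d.1) (hseg c)
          (fun d => hHmem d.1 d.2) (by
            intro i j
            rcases lt_trichotomy i.1 j.1 with h | h | h
            · right; exact (hHs _ _ _).trans (hFH x _ _ h)
            · left; rw [h]
            · left; exact (hHs _ _ _).trans (hFH x _ _ h))
        rw [hFF, Set.inter_eq_right.2 (hsub _ h1)]
        exact h1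
      · rw [hFF]
        rw [not_nonempty_iff] at hc
        simpa using h0
    refine ⟨hmem, ?_⟩
    by_cases hcase : ∃ e, e < c ∧ ∀ d, e ≤ d → d < c → d ≠ β (FF x d)
    · obtain ⟨e, hec, hne⟩ := hcase
      have hst : ∀ d, e ≤ d → d ≤ c → FF x d = FF x e := fun d hd hdc =>
        hstay x e d hd fun d' h1 h2 => hne d' h1 (h2.trans_le hdc)
      rw [hst c hec.le le_rfl]
      obtain ⟨-, h2, h3⟩ := ih' e hec
      constructor
      · by_contra! h
        have := hne _ h2 h
        rw [hst _ h2 h.le] at this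
        exact this rfl
      · intro i hi
        rcases lt_or_ge i e with h | h
        · exact h3 i h
        · rcases hok i hi with h4 | h4
          · rw [h4.2, hst i h hi.le]
          · exact absurd h4.1 (hne i h hi)
    · push Not at hcase
      have hall : ∀ w ∈ FF x c, Ag c w x := by
        intro w hw i hi
        obtain ⟨d, hid, hdc, hd⟩ := hcase i hi
        have hxV : x d ∈ V (FF x d) := by
          rcases hok d hdc with h1 | h1
          · exact absurd hd h1.1.ne
          · exact h1.2
        have h1 := hFH x c d hdc hw
        simp only [H, if_pos hd] at h1
        obtain ⟨h2, h3⟩ := hgv _ (ih' d hdc).1 _ hxV w h1.2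
        rw [← hd] at h2 h3
        rcases hid.lt_or_eq with h | h
        · rw [h2 i h, (ih' d hdc).2.2 i h]
        · rw [h, h3]
      refine ⟨?_, hall _ (hτ _ hmem)⟩
      by_contra! h
      have h1 : V (FF x c) ⊆ {x (β (FF x c))} := by
        rintro a ⟨⟨w, hw, -, rfl⟩, -⟩
        exact hall w hw _ h
      have h2 := (hV _ hmem).trans (mk_le_mk_of_subset h1)
      rw [mk_singleton] at h2
      exact absurd h2 (not_le.2 (by exact_mod_cast hreg.nat_lt 1))
  let S : Set (Nd K K) := {p | ∀ x b, p = xRes K x b → ∀ d, d < b → Ok x d}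
  have hS : ∀ x b, xRes K x b ∈ S ↔ ∀ d, d < b → Ok x d := by
    intro x b
    constructor
    · intro h; exact h x b rfl
    · intro h y c hyc d hd
      obtain ⟨rfl, hxy⟩ := xRes_eq_iff'.1 hyc
      exact (hOkloc x y d (hxy.mono hd.le) (hxy d hd)).1 (h d hd)
  refine ⟨S, ⟨?_, ?_, ?_, ?_⟩, ?_, ?_⟩
  · let b0 : K := wellFounded_lt.min Set.univ Set.univ_nonempty
    refine ⟨xRes K (fun i => i) b0, (hS _ _).2 fun d hd => ?_⟩
    exact absurd hd (wellFounded_lt.not_lt_min _ (Set.mem_univ d))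
  · intro p hp c hc
    obtain ⟨x, b, rfl⟩ := exists_xRes p
    exact (hS x c).2 fun d hd => (hS x b).1 hp d (hd.trans_le hc)
  · intro p hlim hp
    obtain ⟨x, b, rfl⟩ := exists_xRes p
    refine (hS x b).2 fun d hd => ?_
    obtain ⟨e, hde, heb⟩ := hlim.2 d hd
    exact (hS x e).1 (hp e heb) d hde
  · intro p hp
    obtain ⟨x, c, rfl⟩ := exists_xRes p
    obtain ⟨hF, hcβ, hτx⟩ := hinv x c ((hS x c).1 hp)
    set F := FF x c with hFdef
    -- any branch agreeing with `τ F` below `β F`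
    have key : ∀ y, Ag (β F) y (τ F) → (∀ d, d < β F → Ok y d) ∧ FF y (β F) = F := by
      intro y hy
      have hyx : FF y c = F := hloc y x c ((hy.mono hcβ).trans hτx)
      have hst : ∀ d, c ≤ d → d ≤ β F → FF y d = F := by
        intro d
        induction d using WellFoundedLT.induction with
        | _ d ih =>
        intro hcd hd
        rw [hstay y c d hcd, hyx]
        intro d' h1 h2
        rw [ih d' h2 h1 (h2.le.trans hd)]
        exact (h2.trans_le hd).ne
      refine ⟨fun d hd => ?_, hst _ hcβ le_rfl⟩
      rcases lt_or_ge d c with h | h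
      · have hag : Ag c x y := ((hy.mono hcβ).trans hτx).symm
        exact (hOkloc x y d (hag.mono h.le) (hag d h)).1 ((hS x c).1 hp d h)
      · left
        rw [hst d h hd.le]
        exact ⟨hd, hy d hd⟩
    refine ⟨xRes K (τ F) (β F), (hS _ _).2 (key _ (Ag.refl _ _)).1, ndExt_xRes.2 ⟨hcβ, hτx⟩,
      (hV F hF).trans (mk_le_mk_of_subset ?_)⟩
    intro a ha
    obtain ⟨e, he, he'⟩ := exists_next hreg hseg (β F)
    have hag : Ag (β F) (Function.update (τ F) (β F) a) (τ F) := by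
      intro i hi
      simp [Function.update_of_ne hi.ne]
    obtain ⟨k1, k2⟩ := key _ hag
    refine mem_splitVals_xRes.2 ⟨Function.update (τ F) (β F) a, e, (hS _ _).2 ?_, he, hag, by simp⟩
    intro d hd
    rcases (he' d hd).lt_or_eq with h | h
    · exact k1 d h
    · subst h
      right
      rw [k2]
      exact ⟨rfl, by simpa using ha⟩
  · intro x b hx
    obtain ⟨hF, -, h⟩ := hinv x b ((hS x b).1 hx)
    exact ⟨_, hsub _ hF (hτ _ hF), h⟩
  · intro x hx b
    have hok : ∀ d, Ok x d := by
      intro d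
      obtain ⟨e, he, -⟩ := exists_next hreg hseg d
      exact (hS x e).1 (hx e) d he
    by_contra! hcon
    have hne : ∀ d, b ≤ d → d ≠ β (FF x d) := by
      intro d hbd hd
      rcases hok d with h | h
      · exact h.1.ne hd
      · have h2 := h.2.2
        rw [← hd] at h2
        exact absurd h2 (not_lt.2 (hcon d hbd))
    have hst : ∀ d, b ≤ d → FF x d = FF x b := fun d hd =>
      hstay x b d hd fun d' h1 _ => hne d' h1
    have hb := (hinv x b fun d _ => hok d).2.1
    have := hne _ hb
    rw [hst _ hb] at this
    exact this rfl

end Helpers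

section Helpers2

variable {K : Type u} [LinearOrder K]

lemma chain_glue [WellFoundedLT K] (hreg : (#K).IsRegular) (hseg : ∀ b : K, #(Set.Iio b) < #K)
    {I : Type u} (hI : #I < #K) (b : I → K) (z : I → K → K)
    (hag : ∀ i j, Ag (min (b i) (b j)) (z i) (z j)) :
    ∃ (B : K) (Z : K → K), (∀ i, b i ≤ B) ∧ (∀ d, d < B → ∃ i, d < b i) ∧
      ∀ i, Ag (b i) Z (z i) := by
  classical
  have hne : {M : K | ∀ i, b i ≤ M}.Nonempty := by
    obtain ⟨M, hM⟩ := exists_bound_range hreg hseg hI b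
    exact ⟨M, fun i => (hM i).le⟩
  refine ⟨wellFounded_lt.min _ hne, fun d => if h : ∃ i, d < b i then z h.choose d else d,
    wellFounded_lt.min_mem _ hne, fun d hd => ?_, fun i d hd => ?_⟩
  · by_contra! h
    exact wellFounded_lt.not_lt_min {M : K | ∀ i, b i ≤ M} h hd
  · have h : ∃ i, d < b i := ⟨i, hd⟩
    simp only [dif_pos h]
    exact hag _ _ d (lt_min h.choose_spec hd)

lemma miller_pruned [WellFoundedLT K] (hreg : (#K).IsRegular)
    {T : Set (Nd K K)} (hT : MillerTree K T) (x : K → K) (b : K) (hx : xRes K x b ∈ T) :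
    ∃ y ∈ body K T, Ag b y x := by
  classical
  have hKne : Nonempty K := mk_ne_zero_iff.1 hreg.pos.ne'
  obtain ⟨-, hsubt, hsup, hspl⟩ := hT
  have hpick : ∀ p ∈ T, ∃ a, a ∈ splitVals K T p := by
    intro p hp
    obtain ⟨x, b, rfl⟩ := exists_xRes p
    obtain ⟨q, hq, hqe, hqs⟩ := hspl _ hp
    obtain ⟨y, c, rfl⟩ := exists_xRes q
    obtain ⟨hbc, hag⟩ := ndExt_xRes.1 hqe
    have hne : (splitVals K T (xRes K y c)).Nonempty := by
      rw [← Set.nonempty_coe_sort, ← mk_ne_zero_iff]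
      exact (hreg.pos.trans_le hqs).ne'
    obtain ⟨a, ha⟩ := hne
    obtain ⟨w, e, hw, hce, hwy, -⟩ := mem_splitVals_xRes.1 ha
    exact ⟨w b, mem_splitVals_xRes.2 ⟨w, e, hw, hbc.trans_lt hce, (hwy.mono hbc).trans hag, rfl⟩⟩
  choose! pick hpick using hpick
  obtain ⟨y, hy⟩ : ∃ y : K → K, ∀ c, y c = if c < b then x c else pick (xRes K y c) := by
    refine ⟨wellFounded_lt.fix (C := fun _ => K) (fun c ih => if c < b then x c else
      pick ⟨c, fun i => ih i.1 i.2⟩), fun c => ?_⟩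
    rw [WellFounded.fix_eq]
    rfl
  have hyx : Ag b y x := fun i hi => by rw [hy, if_pos hi]
  refine ⟨y, fun c => ?_, hyx⟩
  induction c using WellFoundedLT.induction with
  | _ c ih =>
  rcases le_or_gt c b with hcb | hcb
  · rw [xRes_eq_iff.2 (hyx.mono hcb)]
    exact hsubt _ hx c hcb
  by_cases hlim : IsLimElt K c
  · exact hsup _ hlim fun d hd => ih d hd
  · have : ∃ d, d < c ∧ ∀ e, d < e → c ≤ e := by
      by_contra! h
      exact hlim ⟨⟨b, hcb⟩, fun d hd => h d hd⟩
    obtain ⟨d, hdc, hd⟩ := this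
    have hbd : b ≤ d := by
      by_contra! h
      exact absurd (hd b h) (not_le.2 hcb)
    have h1 := hpick _ (ih d hdc)
    obtain ⟨w, e, hw, hde, hwy, hwd⟩ := mem_splitVals_xRes.1 h1
    have h2 : y d = w d := by rw [hwd, hy, if_neg (not_lt.2 hbd)]
    have h3 : Ag c y w := by
      intro i hi
      rcases lt_trichotomy i d with h | h | h
      · exact (hwy i h).symm
      · rw [h, h2]
      · exact absurd (hd i h) (not_le.2 hi)
    rw [xRes_eq_iff.2 h3]
    exact hsubt _ hw c (hd e hde)

/-- Inside a Miller tree one finds a Miller subtree all of whose branches are unbounded by `f`. -/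
lemma miller_unbounded [WellFoundedLT K] (hreg : (#K).IsRegular)
    (hseg : ∀ b : K, #(Set.Iio b) < #K) {T : Set (Nd K K)} (hT : MillerTree K T) (f : K → K) :
    ∃ S, MillerTree K S ∧ S ⊆ T ∧ ∀ x ∈ body K S, ∀ b, ∃ d, b ≤ d ∧ f d < x d := by
  have hKne : Nonempty K := mk_ne_zero_iff.1 hreg.pos.ne'
  have hpr := miller_pruned hreg hT
  obtain ⟨hTne, hsubt, hsup, hspl⟩ := id hT
  obtain ⟨S, hS, hS1, hS2⟩ := machine hreg hseg (body K T)
    {F | ∃ b z, z ∈ body K T ∧ F = {w | w ∈ body K T ∧ Ag b w z}} f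
    (by
      obtain ⟨p, hp⟩ := hTne
      obtain ⟨x, b, rfl⟩ := exists_xRes p
      obtain ⟨y, hy, -⟩ := hpr x b hp
      refine ⟨wellFounded_lt.min Set.univ Set.univ_nonempty, y, hy, ?_⟩
      ext w
      refine ⟨fun hw => ⟨hw, fun i hi => ?_⟩, fun hw => hw.1⟩
      exact absurd hi (wellFounded_lt.not_lt_min _ (Set.mem_univ i)))
    (by
      rintro _ ⟨b, z, hz, rfl⟩ w hw
      exact hw.1)
    (by
      intro I hIne F hI hF hchain
      choose b z hz hFe using hF
      have hzF : ∀ i, z i ∈ F i := fun i => by rw [hFe i]; exact ⟨hz i, Ag.refl _ _⟩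
      obtain ⟨B, Z, hB1, hB2, hZ⟩ := chain_glue hreg hseg hI b z (by
        intro i j
        rcases hchain i j with h | h
        · have h1 := h (hzF i)
          rw [hFe j] at h1
          exact h1.2.mono (min_le_right _ _)
        · have h1 := h (hzF j)
          rw [hFe i] at h1
          exact h1.2.symm.mono (min_le_left _ _))
      have hZT : xRes K Z B ∈ T := by
        by_cases hatt : ∃ i, b i = B
        · obtain ⟨i, hi⟩ := hatt
          rw [xRes_eq_iff.2 (hi ▸ hZ i)]
          exact hz i B
        · push Not at hatt
          have hlt : ∀ i, b i < B := fun i => lt_of_le_of_ne (hB1 i) (hatt i)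
          refine hsup _ ⟨⟨b hIne.some, hlt _⟩, fun c hc => ?_⟩ fun c hc => ?_
          · obtain ⟨i, hi⟩ := hB2 c hc
            exact ⟨b i, hi, hlt i⟩
          · obtain ⟨i, hi⟩ := hB2 c hc
            change xRes K Z c ∈ T
            rw [xRes_eq_iff.2 ((hZ i).mono hi.le)]
            exact hz i c
      obtain ⟨y, hy, hyZ⟩ := hpr Z B hZT
      refine ⟨B, y, hy, ?_⟩
      ext w
      constructor
      · intro hw
        have hw' : ∀ i, w ∈ body K T ∧ Ag (b i) w (z i) := fun i => by
          have := Set.mem_iInter.1 hw i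
          rwa [hFe i] at this
        refine ⟨(hw' hIne.some).1, fun d hd => ?_⟩
        obtain ⟨i, hi⟩ := hB2 d hd
        rw [(hw' i).2 d hi, hyZ d hd, hZ i d hi]
      · rintro ⟨hw, hwy⟩
        refine Set.mem_iInter.2 fun i => ?_
        rw [hFe i]
        exact ⟨hw, ((hwy.trans hyZ).mono (hB1 i)).trans (hZ i)⟩)
    (by
      rintro _ ⟨b, z, hz, rfl⟩
      obtain ⟨q, hq, hqe, hqs⟩ := hspl _ (hz b)
      obtain ⟨x, c, rfl⟩ := exists_xRes q
      obtain ⟨hbc, hxz⟩ := ndExt_xRes.1 hqe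
      obtain ⟨y, hy, hyx⟩ := hpr x c hq
      refine ⟨c, y, ⟨hy, (hyx.mono hbc).trans hxz⟩, hqs.trans (mk_le_mk_of_subset ?_)⟩
      intro a ha
      obtain ⟨w, e, hw, hce, hwx, hwa⟩ := mem_splitVals_xRes.1 ha
      obtain ⟨v, hv, hvw⟩ := hpr w e hw
      have hvx : Ag c v x := (hvw.mono hce.le).trans hwx
      exact ⟨v, ⟨hv, (hvx.mono hbc).trans hxz⟩, hvx.trans hyx.symm, (hvw c hce).trans hwa⟩)
    (by
      rintro _ ⟨b, z, hz, rfl⟩ w ⟨hw, hwz⟩ e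
      refine ⟨_, ⟨max b e, w, hw, rfl⟩, ?_, ?_⟩
      · rintro v ⟨hv, hvw⟩
        exact ⟨hv, (hvw.mono (le_max_left _ _)).trans hwz⟩
      · rintro v ⟨hv, hvw⟩
        exact hvw.mono (le_max_right _ _))
  refine ⟨S, hS, fun p hp => ?_, hS2⟩
  obtain ⟨x, b, rfl⟩ := exists_xRes p
  obtain ⟨w, hw, hwx⟩ := hS1 x b hp
  rw [← xRes_eq_iff.2 hwx]
  exact hw b

/-- A set with no κ-splitting node has small levels. -/
lemma small_levels [WellFoundedLT K] (hin : (#K).IsInaccessible)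
    (hseg : ∀ b : K, #(Set.Iio b) < #K) (D : Set (K → K))
    (hD : ∀ β, ∀ τ ∈ D, #{a | ∃ w ∈ D, Ag β w τ ∧ w β = a} < #K) (e : K) :
    #{t : Set.Iio e → K | ∃ w ∈ D, t = fun i => w i.1} < #K := by
  have hreg := hin.isRegular
  induction e using WellFoundedLT.induction with
  | _ e ih =>
  have hval : ∀ i, i < e → #{a | ∃ w ∈ D, w i = a} < #K := by
    intro i hi
    have h1 : {a | ∃ w ∈ D, w i = a} ⊆
        ⋃ t : {t : Set.Iio i → K | ∃ w ∈ D, t = fun i => w i.1},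
          {a | ∃ w ∈ D, t.1 = (fun j => w j.1) ∧ w i = a} := by
      rintro a ⟨w, hw, rfl⟩
      exact Set.mem_iUnion.2 ⟨⟨_, w, hw, rfl⟩, w, hw, rfl, rfl⟩
    refine (mk_le_mk_of_subset h1).trans_lt
      ((card_iUnion_lt_iff_forall_of_isRegular hreg (ih i hi)).2 ?_)
    rintro ⟨_, τ, hτ, rfl⟩
    refine (mk_le_mk_of_subset ?_).trans_lt (hD i τ hτ)
    rintro a ⟨w, hw, hwt, hwa⟩
    exact ⟨w, hw, fun j hj => (congrFun hwt ⟨j, hj⟩).symm, hwa⟩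
  have hM : ∀ i : Set.Iio e, ∃ M, ∀ w ∈ D, w i.1 < M := by
    intro i
    obtain ⟨M, hM⟩ := exists_bound hreg hseg _ (hval i.1 i.2)
    exact ⟨M, fun w hw => hM _ ⟨w, hw, rfl⟩⟩
  choose M hM using hM
  obtain ⟨N, hN⟩ := exists_bound_range hreg hseg (hseg e) M
  let G : {t : Set.Iio e → K | ∃ w ∈ D, t = fun i => w i.1} → Set (Set.Iio e × Set.Iio N) :=
    fun t => {p | t.1 p.1 = p.2.1}
  have hG : Function.Injective G := by
    rintro ⟨_, w, hw, rfl⟩ ⟨_, v, hv, rfl⟩ h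
    apply Subtype.ext
    funext i
    have h1 : ((i, ⟨w i.1, (hM i w hw).trans (hN i)⟩) : Set.Iio e × Set.Iio N) ∈
        G ⟨_, w, hw, rfl⟩ := rfl
    rw [h] at h1
    exact (h1 : v i.1 = w i.1).symm
  refine (mk_le_of_injective hG).trans_lt ?_
  rw [mk_set]
  apply hin.isStrongLimit.isStrongPrelimit
  rw [mk_prod, lift_id, lift_id]
  exact mul_lt_of_lt hreg.aleph0_le (hseg e) (hseg N)

lemma split_exists [WellFoundedLT K] (hwc : WComp K)
    (hseg : ∀ b : K, #(Set.Iio b) < #K) (φ : (K → K) → (K → K))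
    (hclo : ∀ x, (∀ e : K, ∃ y, Ag e (φ y) x) → ∃ y, φ y = x)
    (hinv : ∀ y b, ∃ e, ∀ y', Ag e (φ y') (φ y) → Ag b y' y) (b : K) (z : K → K) :
    ∃ β, ∃ τ ∈ φ '' {w | Ag b w z},
      #K ≤ #{a | ∃ w ∈ φ '' {w | Ag b w z}, Ag β w τ ∧ w β = a} := by
  classical
  obtain ⟨hin, htp⟩ := hwc
  have hreg := hin.isRegular
  by_contra! hD
  have hlev := small_levels hin hseg _ hD
  let T' : Set (Nd K K) := {p | ∃ y y', Ag b y z ∧ Ag b y' z ∧ y b ≠ y' b ∧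
    xRes K (φ y) p.1 = p ∧ xRes K (φ y') p.1 = p}
  have hT' : ∀ x e, xRes K x e ∈ T' ↔ ∃ y y', Ag b y z ∧ Ag b y' z ∧ y b ≠ y' b ∧
      Ag e (φ y) x ∧ Ag e (φ y') x := by
    intro x e
    change (∃ y y', Ag b y z ∧ Ag b y' z ∧ y b ≠ y' b ∧
      xRes K (φ y) e = xRes K x e ∧ xRes K (φ y') e = xRes K x e) ↔ _
    simp only [xRes_eq_iff]
  have hsubt : IsSubtree K T' := by
    intro p hp c hc
    obtain ⟨x, e, rfl⟩ := exists_xRes p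
    change xRes K x c ∈ T'
    obtain ⟨y, y', h1, h2, h3, h4, h5⟩ := (hT' x e).1 hp
    exact (hT' x c).2 ⟨y, y', h1, h2, h3, h4.mono hc, h5.mono hc⟩
  obtain ⟨b', hb', -⟩ := exists_next hreg hseg b
  by_cases hlong : ∀ e : K, ∃ t : Set.Iio e → K, (⟨e, t⟩ : Nd K K) ∈ T'
  · obtain ⟨x, hx⟩ := htp T' hsubt ⟨hlong, fun e => by
      refine (mk_le_mk_of_subset ?_).trans_lt (hlev e)
      rintro t ⟨y, y', h1, -, -, h2, -⟩
      refine ⟨φ y, ⟨y, h1, rfl⟩, ?_⟩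
      have h3 : (fun i : Set.Iio e => φ y i.1) = t := by simpa [xRes] using h2
      exact h3.symm⟩
    obtain ⟨y0, rfl⟩ := hclo x fun e => by
      obtain ⟨y, y', -, -, -, h4, -⟩ := (hT' x e).1 (hx e)
      exact ⟨y, h4⟩
    obtain ⟨e, he⟩ := hinv y0 b'
    obtain ⟨y, y', -, -, h3, h4, h5⟩ := (hT' _ e).1 (hx e)
    exact h3 ((he y h4 b hb').trans (he y' h5 b hb').symm)
  · push Not at hlong
    obtain ⟨e, he⟩ := hlong
    have hup : ∀ a, Ag b (Function.update z b a) z := by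
      intro a i hi
      simp [Function.update_of_ne hi.ne]
    let G : K → {t : Set.Iio e → K | ∃ w ∈ φ '' {w | Ag b w z}, t = fun i => w i.1} :=
      fun a => ⟨fun i => φ (Function.update z b a) i.1, φ (Function.update z b a),
        ⟨_, hup a, rfl⟩, rfl⟩
    have hG : Function.Injective G := by
      intro a a' h
      by_contra hne
      refine he (fun i => φ (Function.update z b a) i.1) ?_
      refine (hT' (φ (Function.update z b a)) e).2 ⟨_, _, hup a, hup a', by simpa using hne,
        Ag.refl _ _, fun i hi => ?_⟩
      have h1 := congrArg Subtype.val h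
      exact (congrFun h1 ⟨i, hi⟩).symm
    exact absurd (mk_le_of_injective hG) (not_le.2 (hlev e))

/-- A closed copy of the Baire space contains the body of a Miller tree. -/
lemma miller_of_copy [WellFoundedLT K] (hwc : WComp K)
    (hseg : ∀ b : K, #(Set.Iio b) < #K) (φ : (K → K) → (K → K)) (hinj : Function.Injective φ)
    (hcont : ∀ y e, ∃ b, ∀ y', Ag b y' y → Ag e (φ y') (φ y))
    (hclo : ∀ x, (∀ e : K, ∃ y, Ag e (φ y) x) → ∃ y, φ y = x)
    (hinv : ∀ y b, ∃ e, ∀ y', Ag e (φ y') (φ y) → Ag b y' y) :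
    ∃ S, MillerTree K S ∧ ∀ x b, xRes K x b ∈ S → ∃ y, Ag b (φ y) x := by
  have hreg := hwc.1.isRegular
  have hKne : Nonempty K := mk_ne_zero_iff.1 hreg.pos.ne'
  obtain ⟨S, hS, hS1, -⟩ := machine hreg hseg (Set.range φ)
    {F | ∃ b z, F = φ '' {w | Ag b w z}} (fun i => i)
    (by
      refine ⟨wellFounded_lt.min Set.univ Set.univ_nonempty, fun i => i, ?_⟩
      ext w
      constructor
      · rintro ⟨y, rfl⟩
        exact ⟨y, fun i hi => absurd hi (wellFounded_lt.not_lt_min _ (Set.mem_univ i)), rfl⟩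
      · rintro ⟨y, -, rfl⟩
        exact ⟨y, rfl⟩)
    (by
      rintro _ ⟨b, z, rfl⟩
      exact Set.image_subset_range _ _)
    (by
      intro I hIne F hI hF hchain
      choose b z hFe using hF
      have hmem : ∀ i y, φ y ∈ F i ↔ Ag (b i) y (z i) := fun i y => by
        rw [hFe i, hinj.mem_set_image]; rfl
      obtain ⟨B, Z, hB1, hB2, hZ⟩ := chain_glue hreg hseg hI b z (by
        intro i j
        rcases hchain i j with h | h
        · exact ((hmem j _).1 (h ((hmem i _).2 (Ag.refl _ _)))).mono (min_le_right _ _)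
        · exact ((hmem i _).1 (h ((hmem j _).2 (Ag.refl _ _)))).symm.mono (min_le_left _ _))
      refine ⟨B, Z, ?_⟩
      ext w
      constructor
      · intro hw
        have hw0 := Set.mem_iInter.1 hw hIne.some
        rw [hFe] at hw0
        obtain ⟨y, -, rfl⟩ := hw0
        refine ⟨y, fun d hd => ?_, rfl⟩
        obtain ⟨i, hi⟩ := hB2 d hd
        rw [(hmem i y).1 (Set.mem_iInter.1 hw i) d hi, hZ i d hi]
      · rintro ⟨y, hy, rfl⟩
        refine Set.mem_iInter.2 fun i => (hmem i y).2 ?_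
        exact (Ag.mono hy (hB1 i)).trans (hZ i))
    (by
      rintro _ ⟨b, z, rfl⟩
      exact split_exists hwc hseg φ hclo hinv b z)
    (by
      rintro _ ⟨b, z, rfl⟩ _ ⟨y, hy, rfl⟩ e
      obtain ⟨b', hb'⟩ := hcont y e
      refine ⟨_, ⟨max b b', y, rfl⟩, ?_, ?_⟩
      · rintro _ ⟨v, hv, rfl⟩
        exact ⟨v, (Ag.mono hv (le_max_left _ _)).trans hy, rfl⟩
      · rintro _ ⟨v, hv, rfl⟩
        exact hb' v (Ag.mono hv (le_max_right _ _)))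
  refine ⟨S, hS, fun x b hx => ?_⟩
  obtain ⟨_, ⟨y, rfl⟩, h⟩ := hS1 x b hx
  exact ⟨y, h⟩

lemma kcompact_bound [WellFoundedLT K] (hreg : (#K).IsRegular)
    (hseg : ∀ b : K, #(Set.Iio b) < #K) {C : Set (K → K)} (hC : KCompact K C) (i : K) :
    ∃ M, ∀ y ∈ C, y i < M := by
  obtain ⟨e, he, -⟩ := exists_next hreg hseg i
  obtain ⟨W, hW, hWc, hCW⟩ := hC {U | ∃ s : K → K, U = {x | ∀ j, j < e → x j = s j}}
    (by
      rintro _ ⟨s, rfl⟩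
      exact TopologicalSpace.GenerateOpen.basic _ ⟨e, s, rfl⟩)
    (fun y _ => ⟨_, ⟨y, rfl⟩, fun _ _ => rfl⟩)
  choose s hs using hW
  let v : W → K := fun U => s U.2 i
  obtain ⟨M, hM⟩ := exists_bound_range hreg hseg hWc v
  refine ⟨M, fun y hy => ?_⟩
  obtain ⟨U, hU, hyU⟩ := hCW hy
  have h1 := hM ⟨U, hU⟩
  rw [hs hU] at hyU
  rw [hyU i he]
  exact h1

end Helpers2

/-- If `K` is weakly compact and all Σ¹₁ subsets of `K → K` satisfy the
Hurewicz dichotomy, then every Σ¹₁ subset is κ-Miller measurable. -/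
theorem miller_measurable_of_hurewicz (K : Type u) [LinearOrder K]
    [WellFoundedLT K] (hseg : ∀ b : K, #(Set.Iio b) < #K)
    (hwc : WComp K)
    (hHD : ∀ A : Set (K → K), Sigma11 K A → HD K A)
    (A : Set (K → K)) (hA : Sigma11 K A) :
    ∀ T, MillerTree K T → ∃ S, MillerTree K S ∧ S ⊆ T ∧
      (body K S ⊆ A ∨ body K S ∩ A = ∅) := by
  intro T hT
  have hreg := hwc.1.isRegular
  have hKne : Nonempty K := mk_ne_zero_iff.1 hreg.pos.ne'
  have hcl : IsClosed[bTop K K] (body K T) := by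
    rw [isClosed_bTop_iff hKne]
    intro x hx b
    obtain ⟨w, hw, hwx⟩ := hx b
    rw [← xRes_eq_iff.2 hwx]
    exact hw b
  have hSig : Sigma11 K (A ∩ body K T) := by
    obtain ⟨D, hD, rfl⟩ := hA
    letI := bTop K K
    refine ⟨D ∩ Prod.fst ⁻¹' body K T, hD.inter (hcl.preimage continuous_fst), ?_⟩
    rw [Set.image_inter_preimage]
  rcases hHD _ hSig with ⟨B, ⟨C, hC, rfl⟩, hAB⟩ | ⟨C, hCA, hCc, hCh⟩
  · -- the bounded case
    choose F hF using fun b i => kcompact_bound hreg hseg (hC b) i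
    have hf : ∀ i, ∃ M, ∀ b : Set.Iic i, F b.1 i < M := fun i =>
      exists_bound_range hreg hseg (mk_Iic_lt hreg hseg i) _
    choose f hf using hf
    obtain ⟨S, hS, hST, hSf⟩ := miller_unbounded hreg hseg hT f
    refine ⟨S, hS, hST, Or.inr ?_⟩
    rw [Set.eq_empty_iff_forall_notMem]
    rintro x ⟨hxS, hxA⟩
    have hxT : x ∈ body K T := fun b => hST (hxS b)
    obtain ⟨b, hb⟩ := Set.mem_iUnion.1 (hAB ⟨hxA, hxT⟩)
    obtain ⟨d, hbd, hd⟩ := hSf x hxS b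
    exact lt_asymm hd ((hF b d x hb).trans (hf d ⟨b, hbd⟩))
  · -- the closed copy case
    have hclC := (isClosed_bTop_iff hKne).1 hCc
    letI := bTop K K
    obtain ⟨h⟩ : Nonempty (↥C ≃ₜ (K → K)) := hCh
    have hφC : ∀ y, (h.symm y).1 ∈ C := fun y => (h.symm y).2
    obtain ⟨S, hS, hS1⟩ := miller_of_copy hwc hseg (fun y => (h.symm y).1)
      (Subtype.val_injective.comp h.symm.injective)
      (by
        intro y e
        have hop : IsOpen[bTop K K] {w : K → K | Ag e w (h.symm y).1} :=
          TopologicalSpace.GenerateOpen.basic _ ⟨e, _, rfl⟩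
        have h2 := hop.preimage (continuous_subtype_val.comp h.symm.continuous)
        exact (isOpen_bTop_iff hKne).1 h2 y (Ag.refl _ _))
      (by
        intro x hx
        have hxC : x ∈ C := hclC x fun e => by
          obtain ⟨y, hy⟩ := hx e
          exact ⟨_, hφC y, hy⟩
        exact ⟨h ⟨x, hxC⟩, by simp⟩)
      (by
        intro y b
        have hop : IsOpen[bTop K K] {w : K → K | Ag b w y} :=
          TopologicalSpace.GenerateOpen.basic _ ⟨b, _, rfl⟩
        obtain ⟨U, hU, hUe⟩ := isOpen_induced_iff.1 (hop.preimage h.continuous)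
        have hmem : ∀ y', (h.symm y').1 ∈ U ↔ Ag b y' y := by
          intro y'
          have h3 : h.symm y' ∈ (Subtype.val ⁻¹' U : Set C) ↔
            h.symm y' ∈ h ⁻¹' {w : K → K | Ag b w y} := by rw [hUe]
          simpa using h3
        obtain ⟨e, he⟩ := (isOpen_bTop_iff hKne).1 hU _ ((hmem y).2 (Ag.refl _ _))
        exact ⟨e, fun y' hy' => (hmem y').1 (he _ hy')⟩)
    refine ⟨S, hS, fun p hp => ?_, Or.inl fun x hx => ?_⟩
    · obtain ⟨x, b, rfl⟩ := exists_xRes p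
      obtain ⟨y, hy⟩ := hS1 x b hp
      rw [← xRes_eq_iff.2 hy]
      exact (hCA (hφC y)).2 b
    · refine (hCA (hclC x fun b => ?_)).1
      obtain ⟨y, hy⟩ := hS1 x b (hx b)
      exact ⟨_, hφC y, hy⟩
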